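/- Let k ≥ 1 and η > 0. Let (M_n)_{n≥1} be continuous linear automorphisms of ℂ^k and define A_0 = id, A_{n+1} = M_{n+1} ∘ A_n. Let (s_n)_{n≥0} be positive reals with s_0 ≤ η, let (ν_n)_{n≥0} be nonnegative reals, and let (g_n)_{n≥1} be maps ℂ^k → ℂ^k such that, for every n ≥ 0: (i) g_{n+1} is continuous on A_n[B̄(0,s_n)]; (ii) ‖g_{n+1}(u) − M_{n+1}(u)‖ ≤ ν_n for every u ∈ A_n[B̄(0,s_n)]; (iii) s_{n+1} + ‖A_{n+1}⁻¹‖·ν_n < s_n. Then for every n ≥ 0, A_n[B(0,s_n)] ⊆ (g_n ∘ g_{n−1} ∘ ⋯ ∘ g_1)[B(0,η)], where for n = 0 the composition is the identity. -/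

import Mathlib

open Metric

open Filter Function Set Topology

open scoped NNReal

universe u

/-!
Write `L = A (n + 1)` and `f = g (n + 1) ∘ A n`. A point `z` is a value of `L⁻¹ ∘ f` as soon as
`x ↦ x - L⁻¹ (f x) + z` has a fixed point. If `‖z‖ < s (n + 1)`, this map sends the ball of radius
`s n` to itself, because `‖x - L⁻¹ (f x)‖ ≤ ‖L⁻¹‖ * ν n`. Hence each inductive step is an
application of Brouwer's fixed point theorem.

Brouwer's theorem is proved following Milnor and Rogers. If a `C¹` displacement `p` vanishes on the
boundary of a compact set `s`, then for small `t` the map `x ↦ x + t • p x` is a bijection of `s`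
with positive Jacobian, so that `∫ x in s, det (1 + t • Dp x)` is the volume of `s`. This integral
is a polynomial in `t`, so it is the volume of `s` at `t = 1` as well. A `C¹` map of nonzero
constant norm has zero Jacobian, and therefore no such map fixes the boundary of a ball.
-/

section FrontierPerturbation

theorem inter_frontier_nonempty_of_isPreconnected {X : Type*} [TopologicalSpace X] {s t : Set X}
    (ht : IsPreconnected t) (hts : (t ∩ s).Nonempty) (hts' : (t \ s).Nonempty) :
    (t ∩ frontier s).Nonempty := by
  by_contra! hempty
  have hcover : t ⊆ interior s ∪ interior sᶜ := fun x hx => by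
    rw [← compl_frontier_eq_union_interior]
    exact fun hxs => hempty.subset ⟨hx, hxs⟩
  have hdisj : Disjoint (interior s) (interior sᶜ) :=
    disjoint_compl_right.mono interior_subset interior_subset
  obtain ⟨x, hxt, hxs⟩ := hts'
  obtain hsub | hsub := ht.subset_or_subset isOpen_interior isOpen_interior hdisj hcover
  · exact hxs (interior_subset (hsub hxt))
  · obtain ⟨y, hyt, hys⟩ := hts
    exact interior_subset (hsub hyt) hys

theorem lipschitzWith_indicator_of_frontier_eq_zero {E F : Type*} [SeminormedAddCommGroup E]
    [NormedSpace ℝ E] [SeminormedAddCommGroup F] {s : Set E} {p : E → F} {K : ℝ≥0}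
    (hs : IsClosed s) (hp : LipschitzOnWith K p s) (hp0 : ∀ x ∈ frontier s, p x = 0) :
    LipschitzWith K (s.indicator p) := by
  have across : ∀ x ∈ s, ∀ y ∉ s, dist (s.indicator p x) (s.indicator p y) ≤ K * dist x y := by
    intro x hx y hy
    obtain ⟨z, hzxy, hzs⟩ := inter_frontier_nonempty_of_isPreconnected
      (convex_segment (𝕜 := ℝ) x y).isPreconnected ⟨x, left_mem_segment ℝ x y, hx⟩
      ⟨y, right_mem_segment ℝ x y, hy⟩
    calc dist (s.indicator p x) (s.indicator p y)
        = dist (p x) (p z) := by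
          rw [indicator_of_mem hx, indicator_of_notMem hy, hp0 z hzs]
      _ ≤ K * dist x z := hp.dist_le_mul x hx z (hs.frontier_subset hzs)
      _ ≤ K * dist x y := by
          gcongr
          rw [← dist_add_dist_of_mem_segment hzxy]
          exact le_add_of_nonneg_right dist_nonneg
  refine LipschitzWith.of_dist_le_mul fun x y => ?_
  by_cases hx : x ∈ s <;> by_cases hy : y ∈ s
  · rw [indicator_of_mem hx, indicator_of_mem hy]
    exact hp.dist_le_mul x hx y hy
  · exact across x hx y hy
  · rw [dist_comm, dist_comm x]
    exact across y hy x hx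
  · rw [indicator_of_notMem hx, indicator_of_notMem hy, dist_self]
    positivity

theorem bijective_add_of_lipschitzWith {E : Type*} [NormedAddCommGroup E] [CompleteSpace E]
    {q : E → E} {K : ℝ≥0} (hK : K < 1) (hq : LipschitzWith K q) :
    Bijective fun x => x + q x := by
  have contracting (y : E) : ContractingWith K fun x => y - q x :=
    ⟨hK, by simpa using (LipschitzWith.const y).sub hq⟩
  rw [bijective_iff_existsUnique]
  refine fun y => ⟨(contracting y).fixedPoint, ?_, fun x hx => ?_⟩
  · exact (sub_eq_iff_eq_add.1 (contracting y).fixedPoint_isFixedPt).symm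
  · exact (contracting y).fixedPoint_unique (sub_eq_iff_eq_add.2 hx.symm)

theorem bijOn_add_of_lipschitzOnWith {E : Type*} [NormedAddCommGroup E] [NormedSpace ℝ E]
    [CompleteSpace E] {s : Set E} {p : E → E} {K : ℝ≥0} (hs : IsClosed s) (hK : K < 1)
    (hp : LipschitzOnWith K p s) (hp0 : ∀ x ∈ frontier s, p x = 0) :
    BijOn (fun x => x + p x) s s := by
  have hbij := bijective_add_of_lipschitzWith hK
    (lipschitzWith_indicator_of_frontier_eq_zero hs hp hp0)
  have heqOn : EqOn (fun x => x + s.indicator p x) (fun x => x + p x) s := fun x hx => by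
    simp only [indicator_of_mem hx]
  have hfix : ∀ x ∉ s, x + s.indicator p x = x := fun x hx => by
    rw [indicator_of_notMem hx, add_zero]
  refine BijOn.congr ⟨fun x hx => ?_, hbij.injective.injOn, fun y hy => ?_⟩ heqOn
  · by_contra hx'
    exact hx' ((hbij.injective (hfix _ hx')).symm ▸ hx)
  · obtain ⟨x, hxy⟩ := hbij.surjective y
    refine ⟨x, ?_, hxy⟩
    by_contra hx
    exact hx ((hfix x hx).symm.trans hxy ▸ hy)

end FrontierPerturbation

section DetInterpolation

open Polynomial

theorem exists_polynomial_eval_eq_det_one_add_smul {R V : Type*} [CommRing R] [Nontrivial R]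
    [AddCommGroup V] [Module R V] [Module.Free R V] [Module.Finite R V] (L : V →ₗ[R] V) :
    ∃ P : R[X], P.natDegree ≤ Module.finrank R V ∧
      ∀ t : R, P.eval t = LinearMap.det (1 + t • L) := by
  classical
  let b := Module.finBasis R V
  let B := LinearMap.toMatrix b b L
  refine ⟨((X : R[X]) • B.map C + (1 : Matrix _ _ R).map C).det, ?_, fun t => ?_⟩
  · simpa only [Fintype.card_fin] using natDegree_det_X_add_C_le B 1
  · rw [← LinearMap.det_toMatrix b, ← coe_evalRingHom, RingHom.map_det]
    congr 1
    ext i j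
    simp [B, LinearMap.toMatrix_one, Matrix.one_apply, apply_ite (Polynomial.eval t), add_comm,
      mul_comm t]

theorem det_one_add_eq_sum_eval_lagrangeBasis {F V : Type*} [Field F] [DecidableEq F]
    [AddCommGroup V] [Module F V] [FiniteDimensional F V] {S : Finset F}
    (hS : Module.finrank F V < S.card) (L : V →ₗ[F] V) :
    LinearMap.det (1 + L) =
      ∑ t ∈ S, LinearMap.det (1 + t • L) * (Lagrange.basis S id t).eval 1 := by
  obtain ⟨P, hP, hPeval⟩ := exists_polynomial_eval_eq_det_one_add_smul L
  have hdeg : P.degree < S.card :=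
    degree_le_natDegree.trans_lt (by exact_mod_cast hP.trans_lt hS)
  have h := congrArg (Polynomial.eval 1) (Lagrange.eq_interpolate injective_id.injOn hdeg)
  simpa [Lagrange.interpolate_apply, eval_finsetSum, hPeval] using h

end DetInterpolation

section Jacobian

open MeasureTheory

variable {E : Type*} [NormedAddCommGroup E] [NormedSpace ℝ E] {s : Set E}

theorem continuous_det_one_add_smul {X : Type*} [TopologicalSpace X] {c : X → ℝ}
    {L : X → E →L[ℝ] E} (hc : Continuous c) (hL : Continuous L) :
    Continuous fun x => (1 + c x • L x).det :=
  ContinuousLinearMap.continuous_det.comp (continuous_const.add (hc.smul hL))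

theorem eventually_det_one_add_smul_pos (hs : IsCompact s) {L : E → E →L[ℝ] E}
    (hL : Continuous L) : ∀ᶠ t : ℝ in 𝓝 0, ∀ x ∈ s, 0 < (1 + t • L x).det := by
  refine hs.eventually_forall_of_forall_eventually fun x _ => ?_
  have hdet : Continuous fun z : ℝ × E => (1 + z.1 • L z.2).det :=
    continuous_det_one_add_smul continuous_fst (hL.comp continuous_snd)
  exact hdet.continuousAt.eventually_const_lt (by simp [ContinuousLinearMap.det])

variable [FiniteDimensional ℝ E] {p : E → E}

theorem eventually_bijOn_add_smul (hs : IsCompact s) (hp : ContDiff ℝ 1 p)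
    (hp0 : ∀ x ∈ frontier s, p x = 0) :
    ∀ᶠ t : ℝ in 𝓝 0, BijOn (fun x => x + t • p x) s s := by
  obtain ⟨K, hK⟩ := hp.locallyLipschitz.locallyLipschitzOn.exists_lipschitzOnWith_of_compact hs
  have hsmall : ∀ᶠ t : ℝ in 𝓝 0, ‖t‖₊ * K < 1 :=
    (by fun_prop : Continuous fun t : ℝ => ‖t‖₊ * K).continuousAt.eventually_lt_const (by simp)
  filter_upwards [hsmall] with t ht
  exact bijOn_add_of_lipschitzOnWith hs.isClosed ht
    ((lipschitzWith_smul t).comp_lipschitzOnWith hK) fun x hx => by rw [hp0 x hx, smul_zero]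

variable [MeasurableSpace E] [BorelSpace E] (μ : Measure E) [μ.IsAddHaarMeasure]

theorem eventually_integral_det_one_add_smul_fderiv (hs : IsCompact s) (hp : ContDiff ℝ 1 p)
    (hp0 : ∀ x ∈ frontier s, p x = 0) :
    ∀ᶠ t : ℝ in 𝓝 0, ∫ x in s, (1 + t • fderiv ℝ p x).det ∂μ = μ.real s := by
  filter_upwards [eventually_bijOn_add_smul hs hp hp0,
    eventually_det_one_add_smul_pos hs (hp.continuous_fderiv one_ne_zero)] with t hbij hpos
  have hderiv (x : E) : HasFDerivAt (fun x => x + t • p x) (1 + t • fderiv ℝ p x) x :=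
    (hasFDerivAt_id x).add ((hp.differentiable one_ne_zero x).hasFDerivAt.const_smul t)
  calc ∫ x in s, (1 + t • fderiv ℝ p x).det ∂μ
      = ∫ x in s, |(1 + t • fderiv ℝ p x).det| • (1 : ℝ) ∂μ :=
        setIntegral_congr_fun hs.measurableSet fun x hx => by
          simp only [abs_of_pos (hpos x hx), smul_eq_mul, mul_one]
    _ = ∫ _ in (fun x => x + t • p x) '' s, (1 : ℝ) ∂μ :=
        (integral_image_eq_integral_abs_det_fderiv_smul μ hs.measurableSet
          (fun x _ => (hderiv x).hasFDerivWithinAt) hbij.injOn fun _ => 1).symm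
    _ = μ.real s := by
        rw [hbij.image_eq, setIntegral_const, smul_eq_mul, mul_one]

theorem integral_det_one_add_fderiv (hs : IsCompact s) (hp : ContDiff ℝ 1 p)
    (hp0 : ∀ x ∈ frontier s, p x = 0) :
    ∫ x in s, (1 + fderiv ℝ p x).det ∂μ = μ.real s := by
  obtain ⟨S, hSgood, hScard⟩ := (infinite_of_mem_nhds (0 : ℝ)
    (eventually_integral_det_one_add_smul_fderiv μ hs hp hp0)).exists_subset_card_eq
      (Module.finrank ℝ E + 1)
  have hS : S.Nonempty := Finset.card_pos.1 (hScard ▸ Nat.succ_pos _)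
  have hint (t : ℝ) : IntegrableOn
      (fun x => (1 + t • fderiv ℝ p x).det * (Lagrange.basis S id t).eval 1) s μ :=
    ((continuous_det_one_add_smul continuous_const (hp.continuous_fderiv one_ne_zero)).mul
      continuous_const).continuousOn.integrableOn_compact hs
  calc ∫ x in s, (1 + fderiv ℝ p x).det ∂μ
      = ∫ x in s, ∑ t ∈ S, (1 + t • fderiv ℝ p x).det * (Lagrange.basis S id t).eval 1 ∂μ :=
        integral_congr_ae <| .of_forall fun x =>
          det_one_add_eq_sum_eval_lagrangeBasis (hScard ▸ Nat.lt_succ_self _)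
            (fderiv ℝ p x).toLinearMap
    _ = ∑ t ∈ S, (∫ x in s, (1 + t • fderiv ℝ p x).det ∂μ) * (Lagrange.basis S id t).eval 1 := by
        simp only [integral_finsetSum S fun t _ => hint t, integral_mul_const]
    _ = ∑ t ∈ S, μ.real s * (Lagrange.basis S id t).eval 1 :=
        Finset.sum_congr rfl fun t ht => by rw [hSgood ht]
    _ = μ.real s := by
        rw [← Finset.mul_sum, ← Polynomial.eval_finsetSum, Lagrange.sum_basis injective_id.injOn hS,
          Polynomial.eval_one, mul_one]

end Jacobian

section Brouwer

open Bornology MeasureTheory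

section InnerProductSpace

variable {E : Type*} [NormedAddCommGroup E] [InnerProductSpace ℝ E] [FiniteDimensional ℝ E]

theorem det_fderiv_eq_zero_of_norm_eq {f : E → E} {R : ℝ} (hR : R ≠ 0) (hnorm : ∀ x, ‖f x‖ = R)
    {x : E} (hf : DifferentiableAt ℝ f x) : (fderiv ℝ f x).det = 0 := by
  by_contra hdet
  have horth (v : E) : inner ℝ (f x) (fderiv ℝ f x v) = 0 := by
    have hsq := hf.hasFDerivAt.norm_sq
    simp only [hnorm] at hsq
    simpa using congr($(hsq.unique (hasFDerivAt_const (R ^ 2) x)) v)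
  obtain ⟨v, hv⟩ := ((fderiv ℝ f x).toLinearMap.equivOfDetNeZero hdet).surjective (f x)
  have hself : inner ℝ (f x) (f x) = 0 := by
    nth_rewrite 2 [← hv]
    exact horth v
  exact hR (by rw [← hnorm x, inner_self_eq_zero.1 hself, norm_zero])

theorem not_forall_frontier_eq_of_norm_eq {s : Set E} (hs : IsCompact s)
    (hs' : (interior s).Nonempty) {f : E → E} (hf : ContDiff ℝ 1 f) {R : ℝ} (hR : R ≠ 0)
    (hnorm : ∀ x, ‖f x‖ = R) : ¬∀ x ∈ frontier s, f x = x := by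
  intro hfix
  borelize E
  have hvolume := integral_det_one_add_fderiv (volume : Measure E) hs (hf.sub contDiff_id)
    fun x hx => by simp [hfix x hx]
  have hdet (x : E) : (1 + fderiv ℝ (fun y => f y - id y) x).det = 0 := by
    have hdiff : DifferentiableAt ℝ f x := hf.differentiable one_ne_zero x
    rw [fderiv_fun_sub hdiff differentiableAt_id, fderiv_id, ← ContinuousLinearMap.one_def,
      add_sub_cancel, det_fderiv_eq_zero_of_norm_eq hR hnorm hdiff]
  simp only [hdet, integral_zero] at hvolume
  exact (ENNReal.toReal_pos (Measure.measure_pos_of_nonempty_interior volume hs').ne'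
    hs.measure_lt_top.ne).ne hvolume

theorem exists_isFixedPt_of_contDiff_innerProductSpace {f : E → E} (hf : ContDiff ℝ 1 f)
    (hbdd : IsBounded (range f)) : ∃ x, IsFixedPt f x := by
  by_contra! hne
  obtain ⟨R, hR, hfR⟩ := hbdd.exists_pos_norm_le
  let χ : ContDiffBump (0 : E) := ⟨R, 2 * R, hR, by linarith⟩
  let F : E → E := fun x => x - χ x • f x
  have hF : ContDiff ℝ 1 F := contDiff_id.sub (χ.contDiff.smul hf)
  have hF0 (x : E) : F x ≠ 0 := fun hx => by
    have hx' : x = χ x • f x := sub_eq_zero.1 hx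
    have hxR : x ∈ closedBall (0 : E) R := by
      rw [mem_closedBall_zero_iff, hx', norm_smul, Real.norm_of_nonneg χ.nonneg]
      exact (mul_le_of_le_one_left (norm_nonneg _) χ.le_one).trans (hfR _ (mem_range_self x))
    rw [χ.one_of_mem_closedBall hxR, one_smul] at hx'
    exact hne x hx'.symm
  refine not_forall_frontier_eq_of_norm_eq (isCompact_closedBall (0 : E) (2 * R)) ?_
    (f := fun x => (2 * R / ‖F x‖) • F x) (R := 2 * R)
    ((contDiff_const.div (hF.norm ℝ hF0) fun x => norm_ne_zero_iff.2 (hF0 x)).smul hF)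
    (by positivity) (fun x => ?_) fun x hx => ?_
  · exact ⟨0, ball_subset_interior_closedBall (mem_ball_self (by positivity))⟩
  · rw [norm_smul, Real.norm_of_nonneg (by positivity),
      div_mul_cancel₀ _ (norm_ne_zero_iff.2 (hF0 x))]
  · have hxR : ‖x‖ = 2 * R := mem_sphere_zero_iff_norm.1 (frontier_closedBall_subset_sphere hx)
    have hχ : χ x = 0 := χ.zero_of_le_dist (by simp [χ, hxR])
    simp [F, hχ, hxR, hR.ne']

end InnerProductSpace

variable {E : Type u} [NormedAddCommGroup E] [NormedSpace ℝ E] [FiniteDimensional ℝ E]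

theorem exists_isFixedPt_of_contDiff {f : E → E} (hf : ContDiff ℝ 1 f)
    (hbdd : IsBounded (range f)) : ∃ x, IsFixedPt f x := by
  let e := toEuclidean (E := E)
  have hrange : range (e ∘ f ∘ e.symm) ⊆ e '' range f := by
    rw [range_comp]
    exact image_mono (range_comp_subset_range _ _)
  obtain ⟨y, hy⟩ := exists_isFixedPt_of_contDiff_innerProductSpace
    (e.contDiff.comp (hf.comp e.symm.contDiff))
    ((e.lipschitz.isBounded_image hbdd).subset hrange)
  exact ⟨e.symm y, hy.map fun z => e.symm_apply_apply (f (e.symm z))⟩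

theorem exists_isFixedPt_of_isBounded_range {f : E → E} (hf : Continuous f)
    (hbdd : IsBounded (range f)) : ∃ x, IsFixedPt f x := by
  by_contra! hne
  obtain ⟨R, -, hfR⟩ := hbdd.exists_pos_norm_le
  obtain ⟨ε, hε, hεf⟩ := (isCompact_closedBall (0 : E) (R + 1)).exists_forall_le'
    (hf.dist continuous_id).continuousOn fun x _ => dist_pos.2 (hne x)
  obtain ⟨g, hg, hgf, -⟩ := hf.exists_contDiff_approx 1
    (continuous_const (y := min ε 1)) fun _ => lt_min hε one_pos
  have hgR (x : E) : ‖g x‖ ≤ R + 1 := by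
    have hgf' : ‖g x - f x‖ < 1 := dist_eq_norm (g x) (f x) ▸ (hgf x).trans_le (min_le_right _ _)
    linarith [norm_le_norm_sub_add (g x) (f x), hfR _ (mem_range_self x)]
  obtain ⟨x, hx⟩ := exists_isFixedPt_of_contDiff hg
    (isBounded_iff_forall_norm_le.2 ⟨R + 1, forall_mem_range.2 hgR⟩)
  have hxR : x ∈ closedBall (0 : E) (R + 1) := mem_closedBall_zero_iff.2 (hx ▸ hgR x)
  have hclose : dist (f x) x < ε := by
    simpa only [hx.eq, dist_comm] using (hgf x).trans_le (min_le_left _ _)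
  exact (hεf x hxR).not_gt hclose

/-- **Brouwer's fixed point theorem**. Closed balls satisfy `TietzeExtension`. -/
theorem exists_isFixedPt_of_mapsTo {s : Set E} [TietzeExtension.{u} s] (hs : IsCompact s)
    {f : E → E} (hf : ContinuousOn f s) (hmaps : MapsTo f s s) : ∃ x ∈ s, IsFixedPt f x := by
  obtain ⟨F, hF⟩ := ContinuousMap.exists_restrict_eq hs.isClosed
    ⟨hmaps.restrict f s s, hf.mapsToRestrict hmaps⟩
  have hFf (x : E) (hx : x ∈ s) : (F x : E) = f x := congr(($hF ⟨x, hx⟩ : E))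
  obtain ⟨x, hx⟩ := exists_isFixedPt_of_isBounded_range
    (continuous_subtype_val.comp F.continuous)
    (hs.isBounded.subset (range_subset_iff.2 fun x => (F x).2))
  have hxs : x ∈ s := hx ▸ (F x).2
  exact ⟨x, hxs, (hFf x hxs).symm.trans hx⟩

theorem ball_subset_image_ball_of_norm_sub_le {f : E → E} {r s c : ℝ} (hs : 0 < s)
    (hf : ContinuousOn f (closedBall 0 s)) (hfc : ∀ x ∈ closedBall 0 s, ‖f x - x‖ ≤ c)
    (hrs : r + c ≤ s) : ball 0 r ⊆ f '' ball 0 s := by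
  intro z hz
  have hbound : ∀ x ∈ closedBall 0 s, ‖x - f x + z‖ < s := fun x hx => by
    have hz' : ‖z‖ < r := mem_ball_zero_iff.1 hz
    linarith [norm_add_le (x - f x) z, norm_sub_rev x (f x), hfc x hx]
  have := instTietzeExtensionClosedBall.{u} ℝ (0 : E) hs
  obtain ⟨x, hx, hfix⟩ := exists_isFixedPt_of_mapsTo (isCompact_closedBall (0 : E) s)
    (f := fun x => x - f x + z) ((continuousOn_id.sub hf).add continuousOn_const)
    fun x hx => mem_closedBall_zero_iff.2 (hbound x hx).le
  have hfix' : x - f x + z = x := hfix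
  refine ⟨x, mem_ball_zero_iff.2 ?_, ?_⟩
  · simpa only [hfix'] using hbound x hx
  · rwa [sub_add, sub_eq_self, sub_eq_zero] at hfix'

theorem image_ball_subset_image_ball_of_norm_sub_le {𝕜 F : Type*} [NontriviallyNormedField 𝕜]
    [NormedSpace 𝕜 E] [NormedAddCommGroup F] [NormedSpace 𝕜 F] (L : E ≃L[𝕜] F) {f : E → F}
    {r s c : ℝ} (hs : 0 < s) (hf : ContinuousOn f (closedBall 0 s))
    (hfL : ∀ x ∈ closedBall 0 s, ‖f x - L x‖ ≤ c)
    (hrs : r + ‖(L.symm : F →L[𝕜] E)‖ * c ≤ s) : L '' ball 0 r ⊆ f '' ball 0 s := by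
  have hdist : ∀ x ∈ closedBall 0 s, ‖L.symm (f x) - x‖ ≤ ‖(L.symm : F →L[𝕜] E)‖ * c :=
    fun x hx => calc
      ‖L.symm (f x) - x‖ = ‖L.symm (f x - L x)‖ := by rw [map_sub, L.symm_apply_apply]
      _ ≤ ‖(L.symm : F →L[𝕜] E)‖ * c :=
        (L.symm : F →L[𝕜] E).le_of_opNorm_le_of_le le_rfl (hfL x hx)
  have hsub : ball 0 r ⊆ (L.symm ∘ f) '' ball 0 s :=
    ball_subset_image_ball_of_norm_sub_le hs (L.symm.continuous.comp_continuousOn hf) hdist hrs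
  rw [image_comp, L.symm.image_eq_preimage_symm] at hsub
  exact image_subset_iff.2 hsub

end Brouwer

theorem stmt_7_general {𝕜 E : Type*} [RCLike 𝕜] [NormedAddCommGroup E] [NormedSpace 𝕜 E]
    [FiniteDimensional 𝕜 E] {η : ℝ} {M A : ℕ → E ≃L[𝕜] E}
    (hA0 : A 0 = ContinuousLinearEquiv.refl 𝕜 E) (hA : ∀ n, A (n + 1) = (A n).trans (M (n + 1)))
    {s ν : ℕ → ℝ} (hs : ∀ n, 0 < s n) (hs0 : s 0 ≤ η) {g : ℕ → E → E}
    (hcont : ∀ n, ContinuousOn (g (n + 1)) (A n '' closedBall 0 (s n)))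
    (hclose : ∀ n, ∀ u ∈ A n '' closedBall 0 (s n), ‖g (n + 1) u - M (n + 1) u‖ ≤ ν n)
    (hshrink : ∀ n, s (n + 1) + ‖((A (n + 1)).symm : E →L[𝕜] E)‖ * ν n ≤ s n)
    {G : ℕ → E → E} (hG0 : G 0 = id) (hG : ∀ n, G (n + 1) = g (n + 1) ∘ G n) (n : ℕ) :
    A n '' ball 0 (s n) ⊆ G n '' ball 0 η := by
  let : NormedSpace ℝ E := NormedSpace.restrictScalars ℝ 𝕜 E
  have : IsScalarTower ℝ 𝕜 E := Real.isScalarTower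
  have : FiniteDimensional ℝ E := .trans ℝ 𝕜 E
  induction n with
  | zero => simpa [hA0, hG0] using ball_subset_ball hs0
  | succ n ih =>
    have hstep : A (n + 1) '' ball 0 (s (n + 1)) ⊆ (g (n + 1) ∘ A n) '' ball 0 (s n) :=
      image_ball_subset_image_ball_of_norm_sub_le (A (n + 1)) (hs n)
        ((hcont n).comp (A n).continuous.continuousOn (mapsTo_image _ _))
        (fun x hx => by simpa [hA] using hclose n (A n x) (mem_image_of_mem _ hx)) (hshrink n)
    rw [hG, image_comp]
    exact hstep.trans ((image_comp _ _ _).subset.trans (image_mono ih))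

theorem stmt_7 (k : ℕ) (hk : 1 ≤ k) (η : ℝ) (hη : 0 < η)
    (M A : ℕ → (EuclideanSpace ℂ (Fin k) ≃L[ℂ] EuclideanSpace ℂ (Fin k)))
    (hA0 : A 0 = ContinuousLinearEquiv.refl ℂ (EuclideanSpace ℂ (Fin k)))
    (hA : ∀ n : ℕ, A (n + 1) = (A n).trans (M (n + 1)))
    (s : ℕ → ℝ) (hs : ∀ n, 0 < s n) (hs0 : s 0 ≤ η)
    (ν : ℕ → ℝ) (hν : ∀ n, 0 ≤ ν n)
    (g : ℕ → EuclideanSpace ℂ (Fin k) → EuclideanSpace ℂ (Fin k))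
    (hcont : ∀ n : ℕ,
      ContinuousOn (g (n + 1)) (A n '' closedBall (0 : EuclideanSpace ℂ (Fin k)) (s n)))
    (hclose : ∀ n : ℕ, ∀ u ∈ A n '' closedBall (0 : EuclideanSpace ℂ (Fin k)) (s n),
      ‖g (n + 1) u - M (n + 1) u‖ ≤ ν n)
    (hshrink : ∀ n : ℕ, s (n + 1) +
      ‖((A (n + 1)).symm : EuclideanSpace ℂ (Fin k) →L[ℂ] EuclideanSpace ℂ (Fin k))‖ * ν n
        < s n)
    (G : ℕ → EuclideanSpace ℂ (Fin k) → EuclideanSpace ℂ (Fin k))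
    (hG0 : G 0 = id) (hG : ∀ n : ℕ, G (n + 1) = g (n + 1) ∘ G n) :
    ∀ n : ℕ, A n '' ball (0 : EuclideanSpace ℂ (Fin k)) (s n) ⊆
      G n '' ball (0 : EuclideanSpace ℂ (Fin k)) η := by
  exact stmt_7_general hA0 hA hs hs0 hcont hclose (fun n => (hshrink n).le) hG0 hG
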